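/- For every n ≥ 1, there is a bijection between the set of labeled planar binary trees with n leaves avoiding the two patterns y(*, y(*,*)) and y(*, x(*, x(*,*))), and the set of labeled planar binary trees with n leaves avoiding the single pattern y(*, x(*,*)). -/

import Mathlib

/-- Planar binary trees with internal vertices labeled by one of two symbols `x`, `y`. -/
inductive LTree : Type
  | leaf : LTree
  | x : LTree → LTree → LTree
  | y : LTree → LTree → LTree

namespace LTree

/-- Number of leaves. -/
def leaves : LTree → ℕ
  | leaf => 1
  | x u v => u.leaves + v.leaves
  | y u v => u.leaves + v.leaves

/-- The subtree relation. -/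
inductive Subtree : LTree → LTree → Prop
  | refl (t : LTree) : Subtree t t
  | xl {s u v : LTree} : Subtree s u → Subtree s (x u v)
  | xr {s u v : LTree} : Subtree s v → Subtree s (x u v)
  | yl {s u v : LTree} : Subtree s u → Subtree s (y u v)
  | yr {s u v : LTree} : Subtree s v → Subtree s (y u v)

/-- A tree matches (at the root) one of the two forbidden patterns
`y(*, y(*,*))` and `y(*, x(*, x(*,*)))` of noncom-Flex. -/
def IsBadFlex : LTree → Prop
  | y _ (y _ _) => True
  | y _ (x _ (x _ _)) => True
  | _ => False

/-- A tree avoids the two noncom-Flex patterns. -/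
def AvoidsFlex (t : LTree) : Prop := ∀ s : LTree, Subtree s t → ¬ IsBadFlex s

/-- A tree matches (at the root) the single forbidden pattern `y(*, x(*,*))`
of the L-operad of Leroux. -/
def IsBadL : LTree → Prop
  | y _ (x _ _) => True
  | _ => False

/-- A tree avoids the single pattern `y(*, x(*,*))`. -/
def AvoidsL (t : LTree) : Prop := ∀ s : LTree, Subtree s t → ¬ IsBadL s

end LTree

namespace LTree

theorem avoidsFlex_leaf : AvoidsFlex leaf := by
  intro s h; cases h; simp [IsBadFlex]

theorem avoidsL_leaf : AvoidsL leaf := by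
  intro s h; cases h; simp [IsBadL]

theorem avoidsFlex_x (u v : LTree) : AvoidsFlex (x u v) ↔ AvoidsFlex u ∧ AvoidsFlex v := by
  constructor
  · exact fun h => ⟨fun s hs => h s (.xl hs), fun s hs => h s (.xr hs)⟩
  · rintro ⟨h1, h2⟩ s hs
    cases hs with
    | refl => simp [IsBadFlex]
    | xl h => exact h1 s h
    | xr h => exact h2 s h

theorem avoidsFlex_y (u v : LTree) :
    AvoidsFlex (y u v) ↔ AvoidsFlex u ∧ AvoidsFlex v ∧ ¬ IsBadFlex (y u v) := by
  constructor
  · exact fun h => ⟨fun s hs => h s (.yl hs), fun s hs => h s (.yr hs), h _ (.refl _)⟩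
  · rintro ⟨h1, h2, h3⟩ s hs
    cases hs with
    | refl => exact h3
    | yl h => exact h1 s h
    | yr h => exact h2 s h

theorem avoidsL_x (u v : LTree) : AvoidsL (x u v) ↔ AvoidsL u ∧ AvoidsL v := by
  constructor
  · exact fun h => ⟨fun s hs => h s (.xl hs), fun s hs => h s (.xr hs)⟩
  · rintro ⟨h1, h2⟩ s hs
    cases hs with
    | refl => simp [IsBadL]
    | xl h => exact h1 s h
    | xr h => exact h2 s h

theorem avoidsL_y (u v : LTree) :
    AvoidsL (y u v) ↔ AvoidsL u ∧ AvoidsL v ∧ ¬ IsBadL (y u v) := by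
  constructor
  · exact fun h => ⟨fun s hs => h s (.yl hs), fun s hs => h s (.yr hs), h _ (.refl _)⟩
  · rintro ⟨h1, h2, h3⟩ s hs
    cases hs with
    | refl => exact h3
    | yl h => exact h1 s h
    | yr h => exact h2 s h

/-- From Flex-normal trees to L-normal trees. -/
def toL : LTree → LTree
  | leaf => leaf
  | x u v => x (toL u) (toL v)
  | y u leaf => y (toL u) leaf
  | y u (x v w) => y (toL u) (y (toL v) (toL w))
  | y _ (y _ _) => leaf

/-- From L-normal trees to Flex-normal trees. -/
def toFlex : LTree → LTree
  | leaf => leaf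
  | x u v => x (toFlex u) (toFlex v)
  | y u leaf => y (toFlex u) leaf
  | y u (y v w) => y (toFlex u) (x (toFlex v) (toFlex w))
  | y _ (x _ _) => leaf

theorem toL_spec (t : LTree) (h : AvoidsFlex t) :
    (toL t).leaves = t.leaves ∧ AvoidsL (toL t) ∧ toFlex (toL t) = t := by
  induction t using toL.induct with
  | case1 => simp [toL, toFlex, avoidsL_leaf]
  | case2 u v hu hv =>
    rw [avoidsFlex_x] at h
    have := hu h.1
    have := hv h.2
    simp_all [toL, toFlex, leaves, avoidsL_x]
  | case3 u hu =>
    rw [avoidsFlex_y] at h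
    have := hu h.1
    simp_all [toL, toFlex, leaves, avoidsL_y, avoidsL_leaf, IsBadL]
  | case4 u v w hu hv hw =>
    rw [avoidsFlex_y, avoidsFlex_x] at h
    obtain ⟨a, ⟨b, c⟩, d⟩ := h
    have h1 := hu a
    have h2 := hv b
    have h3 := hw c
    have h4 : ¬ IsBadL (y (toL v) (toL w)) := by
      rcases w with _ | _ | ⟨p, _ | _ | _⟩ <;> simp_all [toL, IsBadL, IsBadFlex]
    have h5 : ¬ IsBadL (y (toL u) (y (toL v) (toL w))) := by simp [IsBadL]
    refine ⟨?_, ?_, ?_⟩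
    · simp [toL, leaves, h1, h2, h3]
    · simp only [toL, avoidsL_y]
      exact ⟨h1.2.1, ⟨h2.2.1, h3.2.1, h4⟩, h5⟩
    · simp [toL, toFlex, h1, h2, h3]
  | case5 u v w =>
    exact absurd trivial (h _ (.refl _))

theorem toFlex_spec (t : LTree) (h : AvoidsL t) :
    (toFlex t).leaves = t.leaves ∧ AvoidsFlex (toFlex t) ∧ toL (toFlex t) = t := by
  induction t using toFlex.induct with
  | case1 => simp [toL, toFlex, avoidsFlex_leaf]
  | case2 u v hu hv =>
    rw [avoidsL_x] at h
    have := hu h.1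
    have := hv h.2
    simp_all [toL, toFlex, leaves, avoidsFlex_x]
  | case3 u hu =>
    rw [avoidsL_y] at h
    have := hu h.1
    simp_all [toL, toFlex, leaves, avoidsFlex_y, avoidsFlex_leaf, IsBadFlex]
  | case4 u v w hu hv hw =>
    rw [avoidsL_y, avoidsL_y] at h
    obtain ⟨a, ⟨b, c, d⟩, -⟩ := h
    have h1 := hu a
    have h2 := hv b
    have h3 := hw c
    have h4 : ¬ IsBadFlex (y (toFlex u) (x (toFlex v) (toFlex w))) := by
      rcases w with _ | _ | ⟨p, _ | _ | _⟩ <;> simp_all [toFlex, IsBadL, IsBadFlex]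
    refine ⟨?_, ?_, ?_⟩
    · simp [toFlex, leaves, h1, h2, h3]
    · simp only [toFlex, avoidsFlex_y, avoidsFlex_x]
      exact ⟨h1.2.1, ⟨h2.2.1, h3.2.1⟩, h4⟩
    · simp [toL, toFlex, h1, h2, h3]
  | case5 u v w =>
    exact absurd trivial (h _ (.refl _))

end LTree

open LTree in
/-- For every `n ≥ 1` there is a bijection between labeled planar binary trees with
`n` leaves avoiding `y(*, y(*,*))` and `y(*, x(*, x(*,*)))` (normal monomials of
noncom-Flex) and those avoiding the single pattern `y(*, x(*,*))` (normal monomials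
of the L-operad of Leroux). -/
theorem noncomFlex_bijection_with_L_operad :
    ∀ n : ℕ, 1 ≤ n →
      Nonempty ({t : LTree // t.leaves = n ∧ AvoidsFlex t} ≃
                {t : LTree // t.leaves = n ∧ AvoidsL t}) := by
  intro n _
  exact ⟨{
    toFun := fun t => ⟨toL t.1, (toL_spec t.1 t.2.2).1.trans t.2.1, (toL_spec t.1 t.2.2).2.1⟩
    invFun := fun t =>
      ⟨toFlex t.1, (toFlex_spec t.1 t.2.2).1.trans t.2.1, (toFlex_spec t.1 t.2.2).2.1⟩
    left_inv := fun t => Subtype.ext (toL_spec t.1 t.2.2).2.2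
    right_inv := fun t => Subtype.ext (toFlex_spec t.1 t.2.2).2.2 }⟩
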